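/- There exists no probability measure μ on {0,1}^{ℤ²} satisfying all of the following: (i) μ is positively associated; (ii) μ-almost surely there exists exactly one infinite 0cluster; (iii) μ-almost surely there exists at most one infinite 1*cluster; (iv) μ satisfies the bounded energy condition; (v) there is a constant c > 0 such that for every site x ∈ ℤ², the μ-probability that x belongs to an infinite 1*cluster is at least c. -/

import Mathlib

/-!
The proof is by contradiction. Fix a large square `Γ` around the origin which, with probability
close to `1`, meets an infinite `0`cluster. Paths of ones avoiding `Γ` are lifted to the covering
of `ℤ² \ Γ` that records how often they wind around `Γ`, through a signed count `cross` of their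
crossings of a ray.

* If a site of `Γ` is joined to infinity by zeros, then two paths of ones off `Γ` with the same
  endpoints have the same crossing number (`unique_lift`). Indeed, on a finite set `F` the
  crossing numbers at a point far away are differences of a potential, and this property is
  preserved when the point moves by a lattice step avoiding `F` (`exact_step`).
* Two sites `y`, `x` far from `Γ` are joined by ones off `Γ` with probability at least `c² / 4`
  (`ev_univ_lower`): both belong to infinite `1*`clusters; removing `Γ` detaches only finitely
  many sites from infinity (`exists_not_lost`); and uniqueness persists after the removal, by
  bounded energy (`atMostOne_cut`).
* For every `k`, the events that `y` and `x` are joined with a crossing number at most `k`, or with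
  one larger than `k`, are increasing, and both occur only if no site of `Γ` is joined to
  infinity by zeros. Positive association makes the product of their probabilities tiny, while
  the sum is at least `c² / 4`. So exactly one of them is likely.
* Fix `y` and let `x` vary. Appending a step `x → x'` costs at most a factor `c`, again by
  positive association, so if crossing numbers at most `k` are likely at `x`, then crossing
  numbers at most `k + cross 0 x x'` are likely at `x'`. One turn around `Γ` (`loop`) shows that
  `k` can be replaced by `k - 1`, hence by arbitrarily negative numbers, which is impossible
  (`exists_ev_small`).
-/

open MeasureTheory ProbabilityTheory
open scoped ENNReal

namespace Percolation

/-- Sites of the square lattice. -/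
abbrev Site : Type := ℤ × ℤ

/-- Configurations: spins `0`/`1` encoded as `false`/`true`. -/
abbrev Config : Type := Site → Bool

/-- Nearest-neighbour adjacency: Euclidean distance `1`. -/
def adj (x y : Site) : Prop :=
  (x.1 - y.1) ^ 2 + (x.2 - y.2) ^ 2 = 1

/-- `*`adjacency: Euclidean distance `1` or `√2`. -/
def adjStar (x y : Site) : Prop :=
  x ≠ y ∧ |x.1 - y.1| ≤ 1 ∧ |x.2 - y.2| ≤ 1

/-- `x` and `y` are joined inside `G` by a path whose consecutive sites satisfy `R`. -/
def JoinedIn (R : Site → Site → Prop) (G : Set Site) (x y : Site) : Prop :=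
  ∃ P : List Site, P.Chain' R ∧ (∀ z ∈ P, z ∈ G) ∧ P.head? = some x ∧ P.getLast? = some y

/-- `S` is a `0`cluster of `σ`: a maximal `adj`-connected subset of `σ⁻¹(0)`. -/
def IsCluster0 (σ : Config) (S : Set Site) : Prop :=
  S.Nonempty ∧ (∀ z ∈ S, σ z = false) ∧
    (∀ x ∈ S, ∀ y ∈ S, JoinedIn adj S x y) ∧
    (∀ x ∈ S, ∀ y : Site, adj x y → σ y = false → y ∈ S)

/-- `S` is a `1*`cluster of `σ`: a maximal `adjStar`-connected subset of `σ⁻¹(1)`. -/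
def IsCluster1 (σ : Config) (S : Set Site) : Prop :=
  S.Nonempty ∧ (∀ z ∈ S, σ z = true) ∧
    (∀ x ∈ S, ∀ y ∈ S, JoinedIn adjStar S x y) ∧
    (∀ x ∈ S, ∀ y : Site, adjStar x y → σ y = true → y ∈ S)

/-- `x` belongs to an infinite `1*`cluster of `σ`. -/
def InInfinite1 (σ : Config) (x : Site) : Prop :=
  ∃ S : Set Site, IsCluster1 σ S ∧ S.Infinite ∧ x ∈ S

/-- There is exactly one infinite `0`cluster. -/
def UniqueInfinite0 (σ : Config) : Prop :=
  ∃! S : Set Site, IsCluster0 σ S ∧ S.Infinite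

/-- There is exactly one infinite `1*`cluster. -/
def UniqueInfinite1 (σ : Config) : Prop :=
  ∃! S : Set Site, IsCluster1 σ S ∧ S.Infinite

/-- There is at most one infinite `1*`cluster. -/
def AtMostOneInfinite1 (σ : Config) : Prop :=
  ∀ S T : Set Site, IsCluster1 σ S → S.Infinite → IsCluster1 σ T → T.Infinite → S = T

/-- An infinite `1*`cluster exists. -/
def ExistsInfinite1 (σ : Config) : Prop := ∃ S : Set Site, IsCluster1 σ S ∧ S.Infinite

/-- An infinite `0`cluster exists. -/
def ExistsInfinite0 (σ : Config) : Prop := ∃ S : Set Site, IsCluster0 σ S ∧ S.Infinite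

/-- An increasing event. -/
def IncreasingEvent (A : Set Config) : Prop :=
  ∀ ⦃ξ η : Config⦄, ξ ∈ A → ξ ≤ η → η ∈ A

/-- Positive association: increasing events are positively correlated. -/
def PositivelyAssociated (μ : Measure Config) : Prop :=
  ∀ A B : Set Config, MeasurableSet A → MeasurableSet B →
    IncreasingEvent A → IncreasingEvent B → μ A * μ B ≤ μ (A ∩ B)

/-- The cylinder event "`η` on `Δ`". -/
def cylEvent (Δ : Finset Site) (η : Site → Bool) : Set Config :=
  {σ | ∀ z ∈ Δ, σ z = η z}

/-- The σ-algebra generated by the spins outside `Δ`. -/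
def outsideAlgebra (Δ : Finset Site) : MeasurableSpace Config :=
  MeasurableSpace.comap (fun σ (z : {z : Site // z ∉ Δ}) => σ z.1) inferInstance

/-- The bounded energy condition: `μ(η on Δ | ξ off Δ) ≥ c_{|Δ|}` for a.e. `ξ`, expressed
via integrated conditional probabilities against events of the outside σ-algebra. -/
def BoundedEnergy (μ : Measure Config) : Prop :=
  ∀ n : ℕ, ∃ c : ℝ≥0∞, 0 < c ∧
    ∀ Δ : Finset Site, Δ.card = n → ∀ η : Site → Bool,
      ∀ B : Set Config, MeasurableSet[outsideAlgebra Δ] B →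
        c * μ B ≤ μ (cylEvent Δ η ∩ B)

/-- The finite energy condition: `μ(η on Δ | ξ off Δ) > 0` for a.e. `ξ`, expressed
via integrated conditional probabilities against events of the outside σ-algebra. -/
def FiniteEnergy (μ : Measure Config) : Prop :=
  ∀ (Δ : Finset Site) (η : Site → Bool) (B : Set Config),
    MeasurableSet[outsideAlgebra Δ] B → 0 < μ B → 0 < μ (cylEvent Δ η ∩ B)

/-- The tail σ-algebra. -/
def tailAlgebra : MeasurableSpace Config :=
  ⨅ Δ : Finset Site, outsideAlgebra Δ

/-- Translation of configurations by `v`. -/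
def shift (v : Site) (σ : Config) : Config := fun z => σ (z + v)

/-- A site viewed as a complex number. -/
noncomputable def toC (z : Site) : ℂ := (z.1 : ℂ) + (z.2 : ℂ) * Complex.I

/-- Winding number around the origin of the polygonal curve through the sites of `P`. -/
noncomputable def winding (P : List Site) : ℝ :=
  (1 / (2 * Real.pi)) *
    ((P.zip P.tail).map fun p => Complex.arg (toC p.2 / toC p.1)).sum

/-- Winding number of `P` around the site `w`. -/
noncomputable def windingAround (P : List Site) (w : Site) : ℝ :=
  winding (P.map fun z => z - w)

/-- The site `w` lies in the interior of the circuit `C`, i.e. is enclosed by `C`. -/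
def circuitEncloses (C : List Site) (w : Site) : Prop :=
  w ∉ C ∧ windingAround (C ++ C.take 1) w ≠ 0

/-- A circuit: a path whose starting site is adjacent to its ending site. -/
def IsCircuit (C : List Site) : Prop :=
  C.Chain' adj ∧ ∃ h : C ≠ [], adj (C.getLast h) (C.head h)

/-- A `*`circuit: a `*`path whose starting site is `*`adjacent to its ending site. -/
def IsStarCircuit (C : List Site) : Prop :=
  C.Chain' adjStar ∧ ∃ h : C ≠ [], adjStar (C.getLast h) (C.head h)

/-- A (finite) `1*`path with respect to `σ`. -/
def Is1StarPath (σ : Config) (P : List Site) : Prop :=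
  P ≠ [] ∧ P.Chain' adjStar ∧ ∀ z ∈ P, σ z = true

/-- A (finite) `0`path with respect to `σ`. -/
def Is0Path (σ : Config) (P : List Site) : Prop :=
  P ≠ [] ∧ P.Chain' adj ∧ ∀ z ∈ P, σ z = false

/-- A `1*`circuit with respect to `σ`. -/
def Is1StarCircuit (σ : Config) (C : List Site) : Prop :=
  IsStarCircuit C ∧ ∀ z ∈ C, σ z = true

/-- A `0`circuit with respect to `σ`. -/
def Is0Circuit (σ : Config) (C : List Site) : Prop :=
  IsCircuit C ∧ ∀ z ∈ C, σ z = false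

/-- `C` is a circuit around `Δ`: every site of `Δ` is enclosed by `C`. -/
def CircuitAround (C : List Site) (Δ : Set Site) : Prop :=
  ∀ z ∈ Δ, circuitEncloses C z

/-- A mixed circuit with respect to `σ`: a self-avoiding `*`circuit consisting of a
self-avoiding `1*`path followed by a self-avoiding `0`path (either part may be empty). -/
def IsMixedCircuit (σ : Config) (C : List Site) : Prop :=
  ∃ P Q : List Site, C = P ++ Q ∧ C.Nodup ∧
    P.Chain' adjStar ∧ Q.Chain' adj ∧
    (∀ z ∈ P, σ z = true) ∧ (∀ z ∈ Q, σ z = false) ∧ IsStarCircuit C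

/-- `z` lies in the exterior of the circuit `C`. -/
def InExterior (C : List Site) (z : Site) : Prop :=
  z ∉ C ∧ ¬ circuitEncloses C z

/-- An infinite self-avoiding `1*`path with respect to `σ`. -/
def IsInfSA1StarPath (σ : Config) (f : ℕ → Site) : Prop :=
  Function.Injective f ∧ (∀ i, adjStar (f i) (f (i + 1))) ∧ ∀ i, σ (f i) = true

/-- An infinite self-avoiding `0`path with respect to `σ`. -/
def IsInfSA0Path (σ : Config) (f : ℕ → Site) : Prop :=
  Function.Injective f ∧ (∀ i, adj (f i) (f (i + 1))) ∧ ∀ i, σ (f i) = false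

/-- There exist `n` pairwise disjoint infinite self-avoiding `1*`paths. -/
def HasNDisjoint1 (σ : Config) (n : ℕ) : Prop :=
  ∃ f : Fin n → ℕ → Site, (∀ i, IsInfSA1StarPath σ (f i)) ∧
    ∀ i j, i ≠ j → Disjoint (Set.range (f i)) (Set.range (f j))

/-- A two-sided infinite self-avoiding `1*`path with respect to `σ`. -/
def IsTwoSidedInf1 (σ : Config) (f : ℤ → Site) : Prop :=
  Function.Injective f ∧ (∀ i : ℤ, adjStar (f i) (f (i + 1))) ∧ ∀ i : ℤ, σ (f i) = true

/-- A `1*`path of `σ` from `x` to `y` avoiding `Δ`. -/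
def starPathBetweenAvoiding (σ : Config) (Δ : Set Site) (x y : Site) (P : List Site) : Prop :=
  Is1StarPath σ P ∧ P.head? = some x ∧ P.getLast? = some y ∧ ∀ z ∈ P, z ∉ Δ

/-- `x` is on the left side of `Γ`. -/
def OnLeftSide (x : Site) (Γ : Set Site) : Prop :=
  ∃ d : ℕ, 0 < d ∧ (∀ z ∈ Γ, |z.1| ≤ (d : ℤ) ∧ |z.2| ≤ (d : ℤ)) ∧ x.1 ≤ -(d : ℤ)

/-- `x` is on the right side of `Γ`. -/
def OnRightSide (x : Site) (Γ : Set Site) : Prop :=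
  ∃ d : ℕ, 0 < d ∧ (∀ z ∈ Γ, |z.1| ≤ (d : ℤ) ∧ |z.2| ≤ (d : ℤ)) ∧ (d : ℤ) ≤ x.1

/-- The square `{-n, …, n}²`. -/
def square (n : ℕ) : Set Site := {z : Site | |z.1| ≤ (n : ℤ) ∧ |z.2| ≤ (n : ℤ)}

/-- The `*`boundary `∂*B` of a set of sites. -/
def starBoundary (B : Set Site) : Set Site :=
  {x | x ∉ B ∧ ∃ y ∈ B, adjStar x y}

/-- The union of all infinite `1*`clusters of `σ`. -/
def InfinitePart1 (σ : Config) : Set Site := {z | InInfinite1 σ z}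

/-- The filled infinite `1*`cluster `S₁*`: the infinite `1*`cluster together with all
finite `0`clusters `*`encircled by it. -/
def Fill (σ : Config) : Set Site :=
  InfinitePart1 σ ∪
    {z | ∃ F : Set Site, IsCluster0 σ F ∧ F.Finite ∧ z ∈ F ∧
      ∃ C : List Site, IsStarCircuit C ∧ (∀ w ∈ C, w ∈ InfinitePart1 σ) ∧
        ∀ w ∈ F, circuitEncloses C w}

/-- The indicator of the filled infinite `1*`cluster, as a point of `{0,1}^{ℤ²}`. -/
noncomputable def fillInd (σ : Config) : Site → Bool :=
  fun z => @decide (z ∈ Fill σ) (Classical.propDecidable _)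

/-- Exactly one infinite `0`cluster and exactly one infinite `1*`cluster coexist. -/
def CoexistUnique (σ : Config) : Prop := UniqueInfinite0 σ ∧ UniqueInfinite1 σ


/-! ### Connectivity and infinite clusters -/

/-- A single `R`-step inside the set `G`. -/
def StepIn (R : Site → Site → Prop) (G : Set Site) (a b : Site) : Prop :=
  R a b ∧ a ∈ G ∧ b ∈ G

/-- `x` is joined to infinity inside `G`, phrased with squares so that the corresponding
events are visibly countable combinations of connection events. -/
def ToInfinity (R : Site → Site → Prop) (G : Set Site) (x : Site) : Prop :=
  x ∈ G ∧ ∀ N : ℕ, ∃ y, y ∉ square N ∧ Relation.ReflTransGen (StepIn R G) x y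

/-- The sites of spin `1`. -/
def ones (σ : Config) : Set Site := {z | σ z = true}

/-- The sites of spin `0`. -/
def zeros (σ : Config) : Set Site := {z | σ z = false}

lemma adj_symm {x y : Site} (h : adj x y) : adj y x := by
  unfold adj at *; linarith [sq_nonneg (x.1 - y.1)]

lemma adjStar_symm {x y : Site} (h : adjStar x y) : adjStar y x := by
  obtain ⟨h1, h2, h3⟩ := h
  exact ⟨h1.symm, by rwa [abs_sub_comm], by rwa [abs_sub_comm]⟩

/-- Nearest neighbours differ by `1` in exactly one coordinate. -/
lemma adj_cases {x y : Site} (h : adj x y) :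
    (x.1 = y.1 ∧ (y.2 = x.2 + 1 ∨ x.2 = y.2 + 1)) ∨
    (x.2 = y.2 ∧ (y.1 = x.1 + 1 ∨ x.1 = y.1 + 1)) := by
  unfold adj at h
  have h1 : -1 ≤ x.1 - y.1 := by nlinarith [sq_nonneg (x.2 - y.2)]
  have h2 : x.1 - y.1 ≤ 1 := by nlinarith [sq_nonneg (x.2 - y.2)]
  have h3 : -1 ≤ x.2 - y.2 := by nlinarith [sq_nonneg (x.1 - y.1)]
  have h4 : x.2 - y.2 ≤ 1 := by nlinarith [sq_nonneg (x.1 - y.1)]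
  generalize hu : x.1 - y.1 = u at *
  generalize hv : x.2 - y.2 = v at *
  interval_cases u <;> interval_cases v <;> simp at h <;> omega

lemma square_finite (n : ℕ) : (square n).Finite := by
  refine (((Set.finite_Icc (-(n : ℤ)) n).prod (Set.finite_Icc (-(n : ℤ)) n))).subset ?_
  rintro ⟨a, b⟩ ⟨h1, h2⟩
  exact ⟨abs_le.mp h1, abs_le.mp h2⟩

lemma square_mono {m n : ℕ} (h : m ≤ n) : square m ⊆ square n := by
  rintro z ⟨h1, h2⟩
  have : (m : ℤ) ≤ n := by exact_mod_cast h
  exact ⟨h1.trans this, h2.trans this⟩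

lemma exists_mem_square (z : Site) : ∃ n : ℕ, z ∈ square n := by
  refine ⟨z.1.natAbs + z.2.natAbs, ?_, ?_⟩ <;> push_cast <;>
    linarith [abs_nonneg z.1, abs_nonneg z.2]

lemma finite_subset_square {F : Set Site} (hF : F.Finite) : ∃ n : ℕ, F ⊆ square n := by
  induction F, hF using Set.Finite.induction_on with
  | empty => exact ⟨0, by simp⟩
  | @insert a s _ _ ih =>
    obtain ⟨n, hn⟩ := ih
    obtain ⟨m, hm⟩ := exists_mem_square a
    refine ⟨max n m, Set.insert_subset (square_mono (le_max_right _ _) hm) ?_⟩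
    exact hn.trans (square_mono (le_max_left _ _))

lemma StepIn.mono {R : Site → Site → Prop} {G H : Set Site} (h : G ⊆ H) {x y : Site}
    (hxy : Relation.ReflTransGen (StepIn R G) x y) : Relation.ReflTransGen (StepIn R H) x y :=
  Relation.ReflTransGen.mono (fun _ _ hab => ⟨hab.1, h hab.2.1, h hab.2.2⟩) _ _ hxy

lemma StepIn.mem {R : Site → Site → Prop} {G : Set Site} {x y : Site}
    (hxy : Relation.ReflTransGen (StepIn R G) x y) (hx : x ∈ G) : y ∈ G := by
  induction hxy with
  | refl => exact hx
  | tail _ h _ => exact h.2.2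

lemma StepIn.symm {R : Site → Site → Prop} (hR : ∀ {x y}, R x y → R y x) {G : Set Site}
    {x y : Site} (hxy : Relation.ReflTransGen (StepIn R G) x y) :
    Relation.ReflTransGen (StepIn R G) y x := by
  induction hxy with
  | refl => exact .refl
  | tail _ h ih => exact .head ⟨hR h.1, h.2.2, h.2.1⟩ ih

lemma StepIn.of_joinedIn {R : Site → Site → Prop} {G : Set Site} {x y : Site}
    (h : JoinedIn R G x y) : Relation.ReflTransGen (StepIn R G) x y := by
  obtain ⟨P, hP, hG, hx, hy⟩ := h
  induction P generalizing x with
  | nil => simp at hx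
  | cons a l ih =>
    obtain rfl : a = x := by simpa using hx
    cases l with
    | nil =>
      obtain rfl : a = y := by simpa using hy
      exact .refl
    | cons b l =>
      have hP' := List.isChain_cons_cons.mp hP
      refine .head ⟨hP'.1, hG a (by simp), hG b (by simp)⟩
        (ih hP'.2 (fun z hz => hG z (List.mem_cons_of_mem _ hz)) (by simp) ?_)
      simpa using hy

lemma StepIn.joinedIn {R : Site → Site → Prop} {G : Set Site} {x y : Site}
    (h : Relation.ReflTransGen (StepIn R G) x y) (hx : x ∈ G) : JoinedIn R G x y := by
  induction h using Relation.ReflTransGen.head_induction_on with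
  | refl => exact ⟨[y], List.isChain_singleton _, by simpa using hx, by simp, by simp⟩
  | head hab _ ih =>
    obtain ⟨P, hP, hG, h1, h2⟩ := ih hab.2.2
    cases P with
    | nil => simp at h1
    | cons b l =>
      obtain rfl := Option.some.inj h1
      refine ⟨_ :: b :: l, List.isChain_cons_cons.mpr ⟨hab.1, hP⟩, ?_, rfl, ?_⟩
      · intro z hz
        rcases List.mem_cons.mp hz with rfl | hz
        · exact hx
        · exact hG z hz
      · simpa using h2

/-- A set of sites closed under the steps taken supports the whole path. -/
lemma StepIn.restrict {R : Site → Site → Prop} {G S : Set Site}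
    (hS : ∀ a b, a ∈ S → StepIn R G a b → b ∈ S) {x y : Site}
    (h : Relation.ReflTransGen (StepIn R G) x y) (hx : x ∈ S) :
    Relation.ReflTransGen (StepIn R S) x y ∧ y ∈ S := by
  induction h with
  | refl => exact ⟨.refl, hx⟩
  | tail _ h ih =>
    have := hS _ _ ih.2 h
    exact ⟨ih.1.tail ⟨h.1, ih.2, this⟩, this⟩

lemma ToInfinity.mono {R : Site → Site → Prop} {G H : Set Site} (h : G ⊆ H) {x : Site}
    (hx : ToInfinity R G x) : ToInfinity R H x := by
  refine ⟨h hx.1, fun N => ?_⟩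
  obtain ⟨y, hy, hxy⟩ := hx.2 N
  exact ⟨y, hy, StepIn.mono h hxy⟩

lemma exists_not_mem_square {S : Set Site} (hS : S.Infinite) (N : ℕ) :
    ∃ y ∈ S, y ∉ square N := by
  by_contra! h
  exact hS ((square_finite N).subset h)

lemma toInfinity_of_inInfinite1 {σ : Config} {x : Site} (h : InInfinite1 σ x) :
    ToInfinity adjStar (ones σ) x := by
  obtain ⟨S, ⟨_, h1, h2, _⟩, hinf, hx⟩ := h
  refine ⟨h1 x hx, fun N => ?_⟩
  obtain ⟨y, hyS, hy⟩ := exists_not_mem_square hinf N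
  exact ⟨y, hy, StepIn.mono h1 (StepIn.of_joinedIn (h2 x hx y hyS))⟩

lemma exists_toInfinity_of_uniqueInfinite0 {σ : Config} (h : UniqueInfinite0 σ) :
    ∃ x, ToInfinity adj (zeros σ) x := by
  obtain ⟨S, ⟨⟨⟨x, hx⟩, h1, h2, _⟩, hinf⟩, -⟩ := h
  refine ⟨x, h1 x hx, fun N => ?_⟩
  obtain ⟨y, hyS, hy⟩ := exists_not_mem_square hinf N
  exact ⟨y, hy, StepIn.mono h1 (StepIn.of_joinedIn (h2 x hx y hyS))⟩

/-- The sites reachable from a site joined to infinity form an infinite `1*`cluster. -/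
lemma isCluster1_reach {σ : Config} {x : Site} (h : ToInfinity adjStar (ones σ) x) :
    IsCluster1 σ {y | Relation.ReflTransGen (StepIn adjStar (ones σ)) x y} ∧
      {y | Relation.ReflTransGen (StepIn adjStar (ones σ)) x y}.Infinite := by
  refine ⟨⟨⟨x, .refl⟩, fun z hz => StepIn.mem hz h.1, fun a ha b hb => ?_, ?_⟩, ?_⟩
  · have hab := (StepIn.symm adjStar_symm ha).trans hb
    exact StepIn.joinedIn (StepIn.restrict (S := {y | Relation.ReflTransGen _ x y})
      (fun a b ha hab => Relation.ReflTransGen.tail ha hab) hab ha).1 ha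
  · intro a ha y hay hy
    exact Relation.ReflTransGen.tail ha ⟨hay, StepIn.mem ha h.1, hy⟩
  · intro hfin
    obtain ⟨n, hn⟩ := finite_subset_square hfin
    obtain ⟨y, hy, hxy⟩ := h.2 n
    exact hy (hn hxy)

lemma joined_of_atMostOne {σ : Config} (hσ : AtMostOneInfinite1 σ) {x y : Site}
    (hx : ToInfinity adjStar (ones σ) x) (hy : ToInfinity adjStar (ones σ) y) :
    Relation.ReflTransGen (StepIn adjStar (ones σ)) x y := by
  have hx' := isCluster1_reach hx
  have hy' := isCluster1_reach hy
  have := hσ _ _ hx'.1 hx'.2 hy'.1 hy'.2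
  have h : y ∈ {z | Relation.ReflTransGen (StepIn adjStar (ones σ)) x z} := by
    rw [this]; exact Relation.ReflTransGen.refl
  exact h

/-! ### Winding and the lifted graph -/

/-- Signed crossing number of the step `p → q` with the ray that starts at `z`, points to the
right, and runs slightly below the row of `z`. The ray meets a diagonal step next to its
endpoint in the row of `z`, so the position of that endpoint decides. -/
def cross (z p q : Site) : ℤ :=
  if p.2 + 1 = z.2 ∧ q.2 = z.2 ∧ z.1 < q.1 then 1
  else if p.2 = z.2 ∧ q.2 + 1 = z.2 ∧ z.1 < p.1 then -1 else 0

/-- Crossing numbers at `z` are differences of a potential on `F`; hence no closed `*`path in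
`F` winds around `z`. -/
def Exact (F : Set Site) (z : Site) : Prop :=
  ∃ f : Site → ℤ, ∀ p ∈ F, ∀ q ∈ F, adjStar p q → cross z p q = f q - f p

lemma exact_far {F : Set Site} {n : ℕ} (hF : F ⊆ square n) {z : Site} (hz : z ∉ square n) :
    Exact F z := by
  refine ⟨fun p => if z.1 < -(n : ℤ) ∧ z.2 ≤ p.2 then 1 else 0, fun p hp q hq hpq => ?_⟩
  obtain ⟨p1, p2⟩ := hF hp
  obtain ⟨q1, q2⟩ := hF hq
  obtain ⟨-, h1, h2⟩ := hpq
  have hz' : ¬ (-(n : ℤ) ≤ z.1 ∧ z.1 ≤ n ∧ -(n : ℤ) ≤ z.2 ∧ z.2 ≤ n) := fun h =>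
    hz ⟨abs_le.mpr ⟨h.1, h.2.1⟩, abs_le.mpr ⟨h.2.2.1, h.2.2.2⟩⟩
  rw [abs_le] at p1 p2 q1 q2 h1 h2
  simp only [cross]
  split_ifs <;> omega

lemma exact_right {F : Set Site} {z z' : Site} (h2 : z.2 = z'.2) (h1 : z'.1 = z.1 + 1)
    (hz' : z' ∉ F) {p q : Site} (hp : p ∈ F) (hq : q ∈ F) : cross z p q = cross z' p q := by
  have hp' : ¬ (p.1 = z'.1 ∧ p.2 = z'.2) := fun h => hz' (Prod.ext h.1 h.2 ▸ hp)
  have hq' : ¬ (q.1 = z'.1 ∧ q.2 = z'.2) := fun h => hz' (Prod.ext h.1 h.2 ▸ hq)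
  simp only [cross]
  split_ifs <;> omega

/-- Moving the base point up by one changes crossing numbers by the coboundary of the indicator
of the part of its row to the right of it. -/
lemma exact_up {F : Set Site} {z z' : Site} (h1 : z.1 = z'.1) (h2 : z'.2 = z.2 + 1)
    (hz : z ∉ F) (hz' : z' ∉ F) {p q : Site} (hp : p ∈ F) (hq : q ∈ F) (hpq : adjStar p q) :
    cross z p q = cross z' p q + ((if q.2 = z.2 ∧ z.1 < q.1 then 1 else 0) -
      (if p.2 = z.2 ∧ z.1 < p.1 then 1 else 0)) := by
  have hp' : ¬ (p.1 = z'.1 ∧ p.2 = z'.2) := fun h => hz' (Prod.ext h.1 h.2 ▸ hp)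
  have hq' : ¬ (q.1 = z'.1 ∧ q.2 = z'.2) := fun h => hz' (Prod.ext h.1 h.2 ▸ hq)
  have hp'' : ¬ (p.1 = z.1 ∧ p.2 = z.2) := fun h => hz (Prod.ext h.1 h.2 ▸ hp)
  have hq'' : ¬ (q.1 = z.1 ∧ q.2 = z.2) := fun h => hz (Prod.ext h.1 h.2 ▸ hq)
  obtain ⟨-, h3, h4⟩ := hpq
  rw [abs_le] at h3 h4
  simp only [cross]
  split_ifs <;> omega

lemma exact_step {F : Set Site} {z z' : Site} (h : StepIn adj Fᶜ z z') (he : Exact F z') :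
    Exact F z := by
  obtain ⟨f, hf⟩ := he
  obtain ⟨hadj, hz, hz'⟩ := h
  rcases adj_cases hadj with ⟨h1, h2 | h2⟩ | ⟨h1, h2 | h2⟩
  · refine ⟨fun p => f p + if p.2 = z.2 ∧ z.1 < p.1 then 1 else 0, fun p hp q hq hpq => ?_⟩
    rw [exact_up h1 h2 hz hz' hp hq hpq, hf p hp q hq hpq]; ring
  · refine ⟨fun p => f p - if p.2 = z'.2 ∧ z'.1 < p.1 then 1 else 0, fun p hp q hq hpq => ?_⟩
    have := exact_up h1.symm h2 hz' hz hp hq hpq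
    rw [hf p hp q hq hpq] at this
    linarith
  · exact ⟨f, fun p hp q hq hpq => (exact_right h1 h2 hz' hp hq).trans (hf p hp q hq hpq)⟩
  · exact ⟨f, fun p hp q hq hpq => (exact_right h1.symm h2 hz hp hq).symm.trans
      (hf p hp q hq hpq)⟩

lemma exact_of_path {F : Set Site} {z z' : Site}
    (h : Relation.ReflTransGen (StepIn adj Fᶜ) z z') (he : Exact F z') : Exact F z := by
  induction h using Relation.ReflTransGen.head_induction_on with
  | refl => exact he
  | head hab _ ih => exact exact_step hab ih

/-- Steps of `*`paths in `G`, lifted to the covering in which the second component records the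
crossing number with respect to the origin. -/
def LStep (G : Set Site) (a b : Site × ℤ) : Prop :=
  StepIn adjStar G a.1 b.1 ∧ b.2 = a.2 + cross 0 a.1 b.1

lemma LStep.mono {G H : Set Site} (h : G ⊆ H) {a b : Site × ℤ}
    (hab : Relation.ReflTransGen (LStep G) a b) : Relation.ReflTransGen (LStep H) a b :=
  Relation.ReflTransGen.mono
    (fun _ _ hab => ⟨⟨hab.1.1, h hab.1.2.1, h hab.1.2.2⟩, hab.2⟩) _ _ hab

lemma LStep.mem {G : Set Site} {a b : Site × ℤ}
    (hab : Relation.ReflTransGen (LStep G) a b) (ha : a.1 ∈ G) : b.1 ∈ G := by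
  induction hab with
  | refl => exact ha
  | tail _ h _ => exact h.1.2.2

lemma LStep.exists_finite {G : Set Site} {a b : Site × ℤ}
    (hab : Relation.ReflTransGen (LStep G) a b) :
    ∃ F : Set Site, F.Finite ∧ F ⊆ G ∧ Relation.ReflTransGen (LStep F) a b := by
  induction hab with
  | refl => exact ⟨∅, Set.finite_empty, Set.empty_subset _, .refl⟩
  | @tail b c _ h ih =>
    obtain ⟨F, hF, hFG, hab⟩ := ih
    refine ⟨F ∪ {b.1, c.1}, hF.union (Set.toFinite _), Set.union_subset hFG ?_, ?_⟩
    · rintro z (rfl | rfl)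
      exacts [h.1.2.1, h.1.2.2]
    · exact (LStep.mono Set.subset_union_left hab).tail
        ⟨⟨h.1.1, by simp, by simp⟩, h.2⟩

lemma LStep.exists_lift {G : Set Site} {x y : Site}
    (h : Relation.ReflTransGen (StepIn adjStar G) y x) :
    ∃ j, Relation.ReflTransGen (LStep G) (y, 0) (x, j) := by
  induction h with
  | refl => exact ⟨0, .refl⟩
  | @tail b c _ h ih =>
    obtain ⟨j, hj⟩ := ih
    exact ⟨j + cross 0 b c, hj.tail ⟨h, rfl⟩⟩

lemma LStep.eq_of_exact {F : Set Site} {f : Site → ℤ}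
    (hf : ∀ p ∈ F, ∀ q ∈ F, adjStar p q → cross 0 p q = f q - f p) {a b : Site × ℤ}
    (h : Relation.ReflTransGen (LStep F) a b) : b.2 - a.2 = f b.1 - f a.1 := by
  induction h with
  | refl => simp
  | @tail b c _ h ih =>
    have := hf _ h.1.2.1 _ h.1.2.2 h.1.1
    have := h.2
    linarith

lemma square_joined_zero {n : ℕ} {z : Site} (hz : z ∈ square n) :
    Relation.ReflTransGen (StepIn adj (square n)) 0 z := by
  obtain ⟨a, b⟩ := z
  obtain ⟨ha, hb⟩ := hz
  simp only at ha hb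
  -- first along the horizontal axis, then along the column of `z`
  have key1 : ∀ m : ℕ, (m : ℤ) ≤ n → ∀ s : ℤ, (s = 1 ∨ s = -1) →
      Relation.ReflTransGen (StepIn adj (square n)) 0 (s * m, 0) := by
    intro m
    induction m with
    | zero => intro _ s _; simp; exact .refl
    | succ m ih =>
      intro hm s hs
      push_cast at hm
      refine (ih (by omega) s hs).tail ⟨?_, ?_, ?_⟩
      · rcases hs with rfl | rfl <;> simp [adj]
      · rcases hs with rfl | rfl <;> refine ⟨abs_le.mpr ?_, by simp⟩ <;> simp <;> omega
      · rcases hs with rfl | rfl <;> refine ⟨abs_le.mpr ?_, by simp⟩ <;> simp <;> omega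
  have key2 : ∀ m : ℕ, (m : ℤ) ≤ n → ∀ s : ℤ, (s = 1 ∨ s = -1) →
      Relation.ReflTransGen (StepIn adj (square n)) (a, 0) (a, s * m) := by
    intro m
    induction m with
    | zero => intro _ s _; simp; exact .refl
    | succ m ih =>
      intro hm s hs
      push_cast at hm
      refine (ih (by omega) s hs).tail ⟨?_, ?_, ?_⟩
      · rcases hs with rfl | rfl <;> simp [adj]
      · rcases hs with rfl | rfl <;> refine ⟨ha, abs_le.mpr ?_⟩ <;> simp <;> omega
      · rcases hs with rfl | rfl <;> refine ⟨ha, abs_le.mpr ?_⟩ <;> simp <;> omega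
  have sgn : ∀ t : ℤ, ∃ s : ℤ, (s = 1 ∨ s = -1) ∧ s * (t.natAbs : ℤ) = t := by
    intro t
    rcases le_total 0 t with h | h
    · exact ⟨1, Or.inl rfl, by omega⟩
    · exact ⟨-1, Or.inr rfl, by omega⟩
  obtain ⟨s, hs, hsa⟩ := sgn a
  obtain ⟨t, ht, htb⟩ := sgn b
  have h1 := key1 a.natAbs (by simpa using ha) s hs
  have h2 := key2 b.natAbs (by simpa using hb) t ht
  rw [hsa] at h1
  rw [htb] at h2
  exact h1.trans h2

/-- Planarity: if a site of the square is joined to infinity by zeros, then the crossing number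
of a `1*`path off the square depends only on its endpoints. -/
lemma unique_lift {σ : Config} {n : ℕ} {z : Site} (hz : z ∈ square n)
    (hinf : ToInfinity adj (zeros σ) z) {G : Set Site} (hG : G ⊆ ones σ)
    (hGn : ∀ x ∈ G, x ∉ square n) {x y : Site} {i j : ℤ}
    (hi : Relation.ReflTransGen (LStep G) (y, 0) (x, i))
    (hj : Relation.ReflTransGen (LStep G) (y, 0) (x, j)) : i = j := by
  obtain ⟨F₁, hF₁, hFG₁, h₁⟩ := LStep.exists_finite hi
  obtain ⟨F₂, hF₂, hFG₂, h₂⟩ := LStep.exists_finite hj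
  have hFG : F₁ ∪ F₂ ⊆ G := Set.union_subset hFG₁ hFG₂
  obtain ⟨N, hN⟩ := finite_subset_square (hF₁.union hF₂)
  obtain ⟨z', hz', hzz'⟩ := hinf.2 N
  have p1 : Relation.ReflTransGen (StepIn adj (F₁ ∪ F₂)ᶜ) z z' :=
    StepIn.mono (show zeros σ ⊆ (F₁ ∪ F₂)ᶜ from fun w hw hwF => by
      have h1 : σ w = true := hG (hFG hwF)
      have h0 : σ w = false := hw
      simp [h1] at h0) hzz'
  have p2 : Relation.ReflTransGen (StepIn adj (F₁ ∪ F₂)ᶜ) 0 z :=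
    StepIn.mono (show square n ⊆ (F₁ ∪ F₂)ᶜ from fun w hw hwF => hGn w (hFG hwF) hw)
      (square_joined_zero hz)
  obtain ⟨f, hf⟩ := exact_of_path (p2.trans p1) (exact_far hN hz')
  have e1 := LStep.eq_of_exact hf (LStep.mono Set.subset_union_left h₁)
  have e2 := LStep.eq_of_exact hf (LStep.mono Set.subset_union_right h₂)
  simp only at e1 e2
  linarith

/-! ### The events and their measurability -/

/-- Points reachable in exactly `n` steps. -/
def reachIn {V : Type*} (r : V → V → Prop) : ℕ → V → V → Prop
  | 0, a, b => a = b
  | n + 1, a, b => ∃ c, reachIn r n a c ∧ r c b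

lemma reachIn_iff {V : Type*} (r : V → V → Prop) (a b : V) :
    Relation.ReflTransGen r a b ↔ ∃ n, reachIn r n a b := by
  constructor
  · intro h
    induction h with
    | refl => exact ⟨0, rfl⟩
    | @tail b c _ h ih =>
      obtain ⟨n, hn⟩ := ih
      exact ⟨n + 1, b, hn, h⟩
  · rintro ⟨n, hn⟩
    induction n generalizing b with
    | zero => obtain rfl : a = b := hn; exact .refl
    | succ n ih =>
      obtain ⟨c, hc, hcb⟩ := hn
      exact (ih c hc).tail hcb

lemma measurableSet_reach {V : Type*} [Countable V] {r : Config → V → V → Prop}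
    (h : ∀ a b, MeasurableSet {σ | r σ a b}) (a b : V) :
    MeasurableSet {σ | Relation.ReflTransGen (r σ) a b} := by
  have key : ∀ n, ∀ b, MeasurableSet {σ | reachIn (r σ) n a b} := by
    intro n
    induction n with
    | zero => intro b; exact MeasurableSet.const _
    | succ n ih =>
      intro b
      simp only [reachIn, Set.ofPred_exists]
      exact MeasurableSet.iUnion fun c => (ih c).inter (h c b)
  simp only [reachIn_iff, Set.ofPred_exists]
  exact MeasurableSet.iUnion fun n => key n b

lemma measurableSet_toInfinity (R : Site → Site → Prop) {G : Config → Set Site}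
    (hG : ∀ z, MeasurableSet {σ | z ∈ G σ}) (x : Site) :
    MeasurableSet {σ | ToInfinity R (G σ) x} := by
  unfold ToInfinity
  have : MeasurableSet {σ | ∀ N : ℕ, ∃ y, y ∉ square N ∧
      Relation.ReflTransGen (StepIn R (G σ)) x y} := by
    simp only [Set.ofPred_forall, Set.ofPred_exists]
    refine MeasurableSet.iInter fun N => MeasurableSet.iUnion fun y => ?_
    refine (MeasurableSet.const _).inter (measurableSet_reach (fun a b => ?_) x y)
    exact (MeasurableSet.const _).inter ((hG a).inter (hG b))
  exact (hG x).inter this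

lemma measurableSet_spin (z : Site) (b : Bool) : MeasurableSet {σ : Config | σ z = b} :=
  (measurable_pi_apply (X := fun _ : Site => Bool) z) (measurableSet_singleton b)

/-- The sites of spin `1` off the square of radius `n`. -/
def off (n : ℕ) (σ : Config) : Set Site := {z | σ z = true ∧ z ∉ square n}

lemma off_subset (n : ℕ) (σ : Config) : off n σ ⊆ ones σ := fun _ h => h.1

lemma measurableSet_off (n : ℕ) (z : Site) : MeasurableSet {σ | z ∈ off n σ} :=
  (measurableSet_spin z true).inter (MeasurableSet.const _)

lemma off_mono (n : ℕ) {ξ η : Config} (h : ξ ≤ η) : off n ξ ⊆ off n η := by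
  rintro z ⟨h1, h2⟩
  have := h z
  rw [h1] at this
  exact ⟨top_le_iff.mp this, h2⟩

/-- `y` is joined to `x` by a `1*`path off the square whose crossing number lies in `J`. -/
def ev (n : ℕ) (y x : Site) (J : Set ℤ) : Set Config :=
  {σ | y ∈ off n σ ∧ ∃ j ∈ J, Relation.ReflTransGen (LStep (off n σ)) (y, 0) (x, j)}

lemma measurableSet_ev (n : ℕ) (y x : Site) (J : Set ℤ) : MeasurableSet (ev n y x J) := by
  have : MeasurableSet {σ | ∃ j, j ∈ J ∧
      Relation.ReflTransGen (LStep (off n σ)) (y, 0) (x, j)} := by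
    simp only [Set.ofPred_exists]
    refine MeasurableSet.iUnion fun j => (MeasurableSet.const _).inter
      (measurableSet_reach (fun a b => ?_) _ _)
    exact ((MeasurableSet.const _).inter
      ((measurableSet_off n _).inter (measurableSet_off n _))).inter (MeasurableSet.const _)
  exact (measurableSet_off n y).inter this

lemma increasing_ev (n : ℕ) (y x : Site) (J : Set ℤ) : IncreasingEvent (ev n y x J) := by
  rintro ξ η ⟨h1, j, hj, h2⟩ h
  exact ⟨off_mono n h h1, j, hj, LStep.mono (off_mono n h) h2⟩

/-- No site of the square of radius `n` is joined to infinity by zeros. -/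
def miss (n : ℕ) : Set Config := {σ | ∀ z ∈ square n, ¬ ToInfinity adj (zeros σ) z}

lemma measurableSet_miss (n : ℕ) : MeasurableSet (miss n) := by
  unfold miss
  simp only [Set.ofPred_forall]
  exact MeasurableSet.iInter fun z => MeasurableSet.iInter fun _ =>
    (measurableSet_toInfinity adj (fun z => measurableSet_spin z false) z).compl

lemma ev_eq_of_not_miss {n : ℕ} {y x : Site} {σ : Config} (hσ : σ ∉ miss n) {i j : ℤ}
    (hi : Relation.ReflTransGen (LStep (off n σ)) (y, 0) (x, i))
    (hj : Relation.ReflTransGen (LStep (off n σ)) (y, 0) (x, j)) : i = j := by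
  simp only [miss, Set.mem_ofPred_eq, not_forall, not_not] at hσ
  obtain ⟨z, hz, hinf⟩ := hσ
  exact unique_lift hz hinf (off_subset n σ) (fun _ h => h.2) hi hj

lemma ev_inter_subset_miss (n : ℕ) (y x : Site) {J J' : Set ℤ} (hJ : Disjoint J J') :
    ev n y x J ∩ ev n y x J' ⊆ miss n := by
  rintro σ ⟨⟨-, i, hi, h1⟩, -, j, hj, h2⟩
  by_contra hσ
  have := ev_eq_of_not_miss hσ h1 h2
  exact Set.disjoint_left.mp hJ hi (this ▸ hj)

lemma ev_step {n : ℕ} {y x x' : Site} {J J' : Set ℤ} (hx' : x' ∉ square n)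
    (hxx' : adjStar x x') (hJ : ∀ j ∈ J, j + cross 0 x x' ∈ J') :
    ev n y x J ∩ {σ | σ x' = true} ⊆ ev n y x' J' := by
  rintro σ ⟨⟨hy, j, hj, h⟩, hσ⟩
  have hoff : x' ∈ off n σ := ⟨hσ, hx'⟩
  exact ⟨hy, _, hJ j hj, h.tail ⟨⟨hxx', LStep.mem h hy, hoff⟩, rfl⟩⟩

/-- Some site outside the square of radius `R` is joined to infinity by ones, but no longer so
after the removal of the square of radius `n`. -/
def lost (n R : ℕ) : Set Config :=
  {σ | ∃ x, x ∉ square R ∧ ToInfinity adjStar (ones σ) x ∧ ¬ ToInfinity adjStar (off n σ) x}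

lemma measurableSet_lost (n R : ℕ) : MeasurableSet (lost n R) := by
  unfold lost
  simp only [Set.ofPred_exists]
  exact MeasurableSet.iUnion fun x => (MeasurableSet.const _).inter
    ((measurableSet_toInfinity _ (fun z => measurableSet_spin z true) x).inter
      (measurableSet_toInfinity _ (measurableSet_off n) x).compl)

/-- Removing a finite square cuts only finitely many sites off infinity: each of them lies in a
finite cluster, off the square, of one of the finitely many sites near the square. -/
lemma exists_not_lost (n : ℕ) (σ : Config) : ∃ R, n ≤ R ∧ σ ∉ lost n R := by
  classical
  have hT : ((square (n + 1)).Finite) := square_finite _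
  -- the finite clusters, off the square, of the sites near the square
  let C : Site → Set Site := fun u =>
    {x | u ∈ off n σ ∧ ¬ ToInfinity adjStar (off n σ) u ∧
      Relation.ReflTransGen (StepIn adjStar (off n σ)) u x}
  have hC : ∀ u, (C u).Finite := by
    intro u
    by_cases hu : u ∈ off n σ ∧ ¬ ToInfinity adjStar (off n σ) u
    · have h2 := hu.2
      simp only [ToInfinity, hu.1, true_and, not_forall, not_exists, not_and] at h2
      obtain ⟨N, hN⟩ := h2
      exact (square_finite N).subset fun x hx => by
        by_contra hxN
        exact hN x hxN hx.2.2
    · exact Set.Finite.subset Set.finite_empty fun x hx => hu ⟨hx.1, hx.2.1⟩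
  obtain ⟨R, hR⟩ := finite_subset_square (hT.biUnion fun u _ => hC u)
  refine ⟨max n R, le_max_left _ _, ?_⟩
  rintro ⟨x, hxR, hx, hxn⟩
  have hxR' : x ∉ square R := fun h => hxR (square_mono (le_max_right _ _) h)
  have hxo : x ∈ off n σ := ⟨hx.1, fun h => hxR (square_mono (le_max_left _ _) h)⟩
  -- every path of ones from `x` stays off the square
  have key : ∀ y, Relation.ReflTransGen (StepIn adjStar (ones σ)) x y →
      Relation.ReflTransGen (StepIn adjStar (off n σ)) x y := by
    intro y hy
    induction hy with
    | refl => exact .refl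
    | @tail a b _ hab ih =>
      have ha := StepIn.mem ih hxo
      by_cases hb : b ∈ square n
      · exfalso
        have haT : a ∈ square (n + 1) := by
          obtain ⟨b1, b2⟩ := hb
          obtain ⟨-, h1, h2⟩ := hab.1
          rw [abs_le] at b1 b2 h1 h2
          constructor <;> rw [abs_le] <;> push_cast <;> constructor <;> omega
        have hax := StepIn.symm adjStar_symm ih
        apply hxR'
        apply hR
        simp only [Set.mem_iUnion]
        refine ⟨a, haT, ha, fun hinf => hxn ⟨hxo, fun N => ?_⟩, hax⟩
        obtain ⟨w, hw, haw⟩ := hinf.2 N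
        exact ⟨w, hw, ih.trans haw⟩
      · exact ih.tail ⟨hab.1, ha, hab.2.2, hb⟩
  refine hxn ⟨hxo, fun N => ?_⟩
  obtain ⟨w, hw, hxw⟩ := hx.2 N
  exact ⟨w, hw, key w hxw⟩

lemma lost_anti (n : ℕ) : Antitone (lost n) := by
  rintro R R' h σ ⟨x, hx, h1, h2⟩
  exact ⟨x, fun hxR => hx (square_mono h hxR), h1, h2⟩

lemma miss_anti : Antitone miss := fun _ _ h _ hσ z hz => hσ z (square_mono h hz)

/-! ### Probability estimates -/

lemma exists_small (μ : Measure Config) [IsProbabilityMeasure μ] {D : ℕ → Set Config}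
    (hD : ∀ n, MeasurableSet (D n)) (hanti : Antitone D) (h0 : μ (⋂ n, D n) = 0)
    {ε : ℝ} (hε : 0 < ε) : ∃ n, ∀ m ≥ n, μ.real (D m) < ε := by
  have h := tendsto_measure_iInter_atTop (μ := μ) (fun n => (hD n).nullMeasurableSet) hanti
    ⟨0, measure_ne_top _ _⟩
  rw [h0] at h
  have h' := (ENNReal.tendsto_toReal ENNReal.zero_ne_top).comp h
  have := (h'.eventually (gt_mem_nhds (by simpa using hε)))
  exact Filter.eventually_atTop.mp this

lemma exists_miss_small (μ : Measure Config) [IsProbabilityMeasure μ]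
    (h : ∀ᵐ σ ∂μ, UniqueInfinite0 σ) {ε : ℝ} (hε : 0 < ε) : ∃ n, μ.real (miss n) < ε := by
  obtain ⟨n, hn⟩ := exists_small μ measurableSet_miss miss_anti (by
    refine measure_mono_null ?_ (ae_iff.mp h)
    intro σ hσ hu
    obtain ⟨x, hx⟩ := exists_toInfinity_of_uniqueInfinite0 hu
    obtain ⟨n, hn⟩ := exists_mem_square x
    exact Set.mem_iInter.mp hσ n x hn hx) hε
  exact ⟨n, hn n le_rfl⟩

lemma exists_lost_small (μ : Measure Config) [IsProbabilityMeasure μ] (n : ℕ)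
    {ε : ℝ} (hε : 0 < ε) : ∃ R, n ≤ R ∧ μ.real (lost n R) < ε := by
  obtain ⟨R, hR⟩ := exists_small μ (measurableSet_lost n) (lost_anti n) (by
    convert measure_empty (μ := μ)
    rw [Set.eq_empty_iff_forall_notMem]
    intro σ hσ
    obtain ⟨R, -, h⟩ := exists_not_lost n σ
    exact h (Set.mem_iInter.mp hσ R)) hε
  exact ⟨max n R, le_max_left _ _, hR _ (le_max_right _ _)⟩

open Classical in
/-- The configuration with the square of radius `n` set to `0`. -/
noncomputable def cut (n : ℕ) (σ : Config) : Config :=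
  fun z => if z ∈ square n then false else σ z

lemma ones_cut (n : ℕ) (σ : Config) : ones (cut n σ) = off n σ := by
  ext z
  by_cases h : z ∈ square n <;> simp [ones, cut, off, h]

lemma measurable_cut (n : ℕ) :
    Measurable[outsideAlgebra (square_finite n).toFinset, _] (cut n) := by
  refine @measurable_pi_lambda _ _ _ (outsideAlgebra _) _ _ fun z => ?_
  by_cases h : z ∈ square n
  · simp only [cut, h, if_true]
    exact @measurable_const _ _ _ (outsideAlgebra _) _
  · simp only [cut, h, if_false]
    have hz : z ∉ (square_finite n).toFinset := by simpa using h
    have h1 : Measurable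
        (fun τ : {z : Site // z ∉ (square_finite n).toFinset} → Bool => τ ⟨z, hz⟩) :=
      measurable_pi_apply _
    exact h1.comp (comap_measurable _)

/-- Uniqueness of the infinite `1*`cluster survives the removal of a square, since bounded energy
bounds the law of the cut configuration by a multiple of `μ`. -/
lemma atMostOne_cut {μ : Measure Config} (hE : BoundedEnergy μ)
    (h1 : ∀ᵐ σ ∂μ, AtMostOneInfinite1 σ) (n : ℕ) :
    ∀ᵐ σ ∂μ, AtMostOneInfinite1 (cut n σ) := by
  obtain ⟨c, hc, hE⟩ := hE (square_finite n).toFinset.card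
  set N := toMeasurable μ {σ | ¬ AtMostOneInfinite1 σ} with hN
  have hN0 : μ N = 0 := by rw [hN, measure_toMeasurable]; exact h1
  have hle := hE _ rfl (fun _ => false) (cut n ⁻¹' N)
    (measurable_cut n (measurableSet_toMeasurable _ _))
  have h0 : μ (cylEvent (square_finite n).toFinset (fun _ => false) ∩ cut n ⁻¹' N) = 0 := by
    refine measure_mono_null ?_ hN0
    rintro σ ⟨hσ, hσN⟩
    have : cut n σ = σ := by
      funext z
      by_cases h : z ∈ square n
      · simp only [cut, h, if_true]
        exact (hσ z (by simpa using h)).symm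
      · simp [cut, h]
    rwa [Set.mem_preimage, this] at hσN
  rw [h0, nonpos_iff_eq_zero, mul_eq_zero] at hle
  refine ae_iff.mpr (measure_mono_null ?_ (hle.resolve_left hc.ne'))
  intro σ hσ
  exact subset_toMeasurable _ _ hσ

lemma PositivelyAssociated.real {μ : Measure Config} [IsProbabilityMeasure μ]
    (h : PositivelyAssociated μ) {A B : Set Config} (hA : MeasurableSet A)
    (hB : MeasurableSet B) (iA : IncreasingEvent A) (iB : IncreasingEvent B) :
    μ.real A * μ.real B ≤ μ.real (A ∩ B) := by
  have := ENNReal.toReal_mono (measure_ne_top _ _) (h A B hA hB iA iB)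
  rwa [ENNReal.toReal_mul] at this

lemma increasing_spin (x : Site) : IncreasingEvent {σ | σ x = true} := by
  intro ξ η (h1 : ξ x = true) h
  have := h x
  rw [h1] at this
  exact top_le_iff.mp this

lemma increasing_toInfinity (n : ℕ) (x : Site) :
    IncreasingEvent {σ | ToInfinity adjStar (off n σ) x} :=
  fun _ _ h1 h => ToInfinity.mono (off_mono n h) h1

/-- Two sites far from the square are joined off the square with probability bounded below:
both are joined to infinity there, and the infinite cluster is unique. -/
lemma ev_univ_lower {μ : Measure Config} [IsProbabilityMeasure μ]
    (hP : PositivelyAssociated μ) (h1 : ∀ᵐ σ ∂μ, AtMostOneInfinite1 σ) (hE : BoundedEnergy μ)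
    {c : ℝ} (hc0 : 0 < c) (hc : ∀ x : Site, c ≤ μ.real {σ | ToInfinity adjStar (ones σ) x})
    {n R : ℕ} (hR : μ.real (lost n R) < c / 2) {x y : Site} (hx : x ∉ square R)
    (hy : y ∉ square R) : c ^ 2 / 4 ≤ μ.real (ev n y x Set.univ) := by
  have low : ∀ x, x ∉ square R → c / 2 ≤ μ.real {σ | ToInfinity adjStar (off n σ) x} := by
    intro x hx
    have hsub : {σ | ToInfinity adjStar (ones σ) x} ⊆
        {σ | ToInfinity adjStar (off n σ) x} ∪ lost n R := by
      intro σ hσ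
      by_cases h : ToInfinity adjStar (off n σ) x
      · exact Or.inl h
      · exact Or.inr ⟨x, hx, hσ, h⟩
    have h2 := (measureReal_mono (μ := μ) hsub).trans (measureReal_union_le _ _)
    linarith [hc x]
  have hm := fun x => measurableSet_toInfinity adjStar (measurableSet_off n) x
  have hpa := hP.real (hm x) (hm y) (increasing_toInfinity n x) (increasing_toInfinity n y)
  have hle : μ.real ({σ | ToInfinity adjStar (off n σ) x} ∩
      {σ | ToInfinity adjStar (off n σ) y}) ≤ μ.real (ev n y x Set.univ) := by
    refine ENNReal.toReal_mono (measure_ne_top _ _) (measure_mono_ae ?_)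
    filter_upwards [atMostOne_cut hE h1 n] with σ hσ
    rintro ⟨hx, hy⟩
    have hx' : ToInfinity adjStar (off n σ) x := hx
    have hy' : ToInfinity adjStar (off n σ) y := hy
    rw [← ones_cut] at hx' hy'
    have hj := joined_of_atMostOne hσ hy' hx'
    rw [ones_cut] at hj
    obtain ⟨j, hj⟩ := LStep.exists_lift hj
    exact ⟨hy.1, j, Set.mem_univ _, hj⟩
  nlinarith [low x hx, low y hy]

/-- Along a decreasing sequence of windows with empty intersection, the probability drops below
anything larger than the mass of `miss n`: off `miss n` there is at most one crossing number. -/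
lemma exists_ev_small (μ : Measure Config) [IsProbabilityMeasure μ] (n : ℕ) (y x : Site)
    {J : ℕ → Set ℤ} (hJ : Antitone J) (hJ0 : ∀ j, ∃ m, j ∉ J m) {η : ℝ} (hη : 0 < η) :
    ∃ m, μ.real (ev n y x (J m)) < η + μ.real (miss n) := by
  obtain ⟨m, hm⟩ := exists_small μ (D := fun m => ev n y x (J m) \ miss n)
    (fun m => (measurableSet_ev n y x _).diff (measurableSet_miss n))
    (by
      rintro a b hab σ ⟨⟨h1, j, hj, h2⟩, h3⟩
      exact ⟨⟨h1, j, hJ hab hj, h2⟩, h3⟩)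
    (by
      convert measure_empty (μ := μ)
      rw [Set.eq_empty_iff_forall_notMem]
      intro σ hσ
      rw [Set.mem_iInter] at hσ
      obtain ⟨⟨-, j, -, hj⟩, h0⟩ := hσ 0
      obtain ⟨m, hm⟩ := hJ0 j
      obtain ⟨⟨-, i, hi, hi'⟩, -⟩ := hσ m
      exact hm (ev_eq_of_not_miss h0 hj hi' ▸ hi)) hη
  refine ⟨m, ?_⟩
  have hsub : ev n y x (J m) ⊆ (ev n y x (J m) \ miss n) ∪ miss n := by
    intro σ hσ
    by_cases h : σ ∈ miss n
    · exact Or.inr h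
    · exact Or.inl ⟨hσ, h⟩
  have := (measureReal_mono (μ := μ) hsub).trans (measureReal_union_le _ _)
  linarith [hm m le_rfl]

/-! ### Going once around the square -/

/-- A property of lifted sites that propagates along `*`steps outside a square passes to the
next lower sheet, by a clockwise turn around the square. -/
lemma loop {H : Site → ℤ → Prop} {R : ℕ}
    (hH : ∀ (x x' : Site) (k : ℤ), x ∉ square R → x' ∉ square R → adjStar x x' → H x k →
      H x' (k + cross 0 x x')) {k : ℤ} (h : H ((R : ℤ) + 1, 0) k) :
    H ((R : ℤ) + 1, 0) (k - 1) := by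
  have hsq : ∀ a b : ℤ, ((R : ℤ) < a ∨ a < -(R : ℤ) ∨ (R : ℤ) < b ∨ b < -(R : ℤ)) →
      ((a, b) : Site) ∉ square R := by
    rintro a b hab ⟨h1, h2⟩
    rw [abs_le] at h1 h2
    simp only at h1 h2
    omega
  have move : ∀ (a b a' b' k k' : ℤ),
      ((R : ℤ) < a ∨ a < -(R : ℤ) ∨ (R : ℤ) < b ∨ b < -(R : ℤ)) →
      ((R : ℤ) < a' ∨ a' < -(R : ℤ) ∨ (R : ℤ) < b' ∨ b' < -(R : ℤ)) →
      ((a = a' ∧ (b' = b + 1 ∨ b = b' + 1)) ∨ (b = b' ∧ (a' = a + 1 ∨ a = a' + 1))) →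
      k' = k + cross 0 (a, b) (a', b') → H (a, b) k → H (a', b') k' := by
    intro a b a' b' k k' h1 h2 h3 h4 h5
    rw [h4]
    refine hH (a, b) (a', b') k (hsq _ _ h1) (hsq _ _ h2) ⟨?_, ?_, ?_⟩ h5
    · intro heq
      have e1 := congrArg Prod.fst heq
      have e2 := congrArg Prod.snd heq
      simp only at e1 e2
      omega
    · rw [abs_le]; constructor <;> simp only <;> omega
    · rw [abs_le]; constructor <;> simp only <;> omega
  set M : ℤ := (R : ℤ) + 1 with hM
  have s0 : H (M, -1) (k - 1) := by
    refine move M 0 M (-1) k _ (by omega) (by omega) (by omega) ?_ h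
    simp [cross]; omega
  have s1 : ∀ i : ℕ, (i : ℤ) + 1 ≤ M → H (M, -1 - i) (k - 1) := by
    intro i
    induction i with
    | zero => intro _; simpa using s0
    | succ i ih =>
      intro hi
      push_cast at hi ⊢
      refine move M (-1 - i) M _ (k - 1) _ (by omega) (by omega) (by omega) ?_ (ih (by omega))
      simp only [cross, Prod.fst_zero, Prod.snd_zero]; split_ifs <;> omega
  have s2 : ∀ i : ℕ, (i : ℤ) ≤ 2 * M → H (M - i, -M) (k - 1) := by
    intro i
    induction i with
    | zero =>
      intro _
      have := s1 R (by omega)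
      have e : (-1 - (R : ℤ)) = -M := by omega
      rw [e] at this
      simpa using this
    | succ i ih =>
      intro hi
      push_cast at hi ⊢
      refine move (M - i) (-M) _ _ (k - 1) _ (by omega) (by omega) (by omega) ?_ (ih (by omega))
      simp only [cross, Prod.fst_zero, Prod.snd_zero]; split_ifs <;> omega
  have s3 : ∀ i : ℕ, (i : ℤ) ≤ 2 * M → H (-M, -M + i) (k - 1) := by
    intro i
    induction i with
    | zero =>
      intro _
      have := s2 (2 * R + 2) (by push_cast; omega)
      have e : M - ((2 * R + 2 : ℕ) : ℤ) = -M := by push_cast; omega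
      rw [e] at this
      simpa using this
    | succ i ih =>
      intro hi
      push_cast at hi ⊢
      refine move (-M) (-M + i) _ _ (k - 1) _ (by omega) (by omega) (by omega) ?_ (ih (by omega))
      simp only [cross, Prod.fst_zero, Prod.snd_zero]; split_ifs <;> omega
  have s4 : ∀ i : ℕ, (i : ℤ) ≤ 2 * M → H (-M + i, M) (k - 1) := by
    intro i
    induction i with
    | zero =>
      intro _
      have := s3 (2 * R + 2) (by push_cast; omega)
      have e : -M + ((2 * R + 2 : ℕ) : ℤ) = M := by push_cast; omega
      rw [e] at this
      simpa using this
    | succ i ih =>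
      intro hi
      push_cast at hi ⊢
      refine move (-M + i) M _ _ (k - 1) _ (by omega) (by omega) (by omega) ?_ (ih (by omega))
      simp only [cross, Prod.fst_zero, Prod.snd_zero]; split_ifs <;> omega
  have s5 : ∀ i : ℕ, (i : ℤ) ≤ M → H (M, M - i) (k - 1) := by
    intro i
    induction i with
    | zero =>
      intro _
      have := s4 (2 * R + 2) (by push_cast; omega)
      have e : -M + ((2 * R + 2 : ℕ) : ℤ) = M := by push_cast; omega
      rw [e] at this
      simpa using this
    | succ i ih =>
      intro hi
      push_cast at hi ⊢
      refine move M (M - i) _ _ (k - 1) _ (by omega) (by omega) (by omega) ?_ (ih (by omega))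
      simp only [cross, Prod.fst_zero, Prod.snd_zero]; split_ifs <;> omega
  have := s5 (R + 1) (by push_cast; omega)
  have e : M - ((R + 1 : ℕ) : ℤ) = 0 := by push_cast; omega
  rwa [e] at this

/-- Theorem 1: no probability measure is positively associated, has a.s. a single infinite
`0`cluster, a.s. at most one infinite `1*`cluster, bounded energy, and a uniform positive
lower bound on the probability that a site lies in an infinite `1*`cluster. -/
theorem statement0 :
    ¬ ∃ μ : Measure Config, IsProbabilityMeasure μ ∧
      PositivelyAssociated μ ∧
      (∀ᵐ σ ∂μ, UniqueInfinite0 σ) ∧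
      (∀ᵐ σ ∂μ, AtMostOneInfinite1 σ) ∧
      BoundedEnergy μ ∧
      (∃ c : ℝ≥0∞, 0 < c ∧ ∀ x : Site, c ≤ μ {σ | InInfinite1 σ x}) := by
  rintro ⟨μ, hprob, hP, h0, h1, hE, C, hC, hx1⟩
  have hctop : C ≠ ⊤ := ne_top_of_le_ne_top (measure_ne_top _ _) (hx1 0)
  obtain ⟨c, hcdef⟩ : ∃ c, c = C.toReal := ⟨_, rfl⟩
  have hc0 : 0 < c := hcdef ▸ ENNReal.toReal_pos hC.ne' hctop
  have hc : ∀ x : Site, c ≤ μ.real {σ | ToInfinity adjStar (ones σ) x} := fun x =>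
    hcdef ▸ ENNReal.toReal_mono (measure_ne_top _ _)
      ((hx1 x).trans (measure_mono fun _ h => toInfinity_of_inInfinite1 h))
  have hspin : ∀ x : Site, c ≤ μ.real {σ : Config | σ x = true} := fun x =>
    (hc x).trans (measureReal_mono fun _ h => h.1)
  have hcle : c ≤ 1 := (hc 0).trans measureReal_le_one
  obtain ⟨κ, hκ⟩ : ∃ κ, κ = c ^ 2 / 4 := ⟨_, rfl⟩
  have hκ0 : 0 < κ := by rw [hκ]; positivity
  have hκ1 : κ ≤ 1 := by rw [hκ]; nlinarith
  obtain ⟨n, hn⟩ := exists_miss_small μ h0 (ε := c * κ ^ 2 / 8) (by positivity)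
  have hn' : μ.real (miss n) < κ / 8 := by
    have : c * κ ^ 2 ≤ κ := by
      have : κ ^ 2 ≤ κ := by nlinarith
      nlinarith
    linarith
  obtain ⟨R, hnR, hR⟩ := exists_lost_small μ n (half_pos hc0)
  set y : Site := ((R : ℤ) + 1, 0) with hy_def
  have hy : y ∉ square R := by
    rintro ⟨h, -⟩
    have := (abs_le.mp h).2
    simp [hy_def] at this
  -- the crossing number of a path from `y` to `x` is at most `k` or larger than `k`; positive
  -- association prevents both alternatives from being likely
  have hsum : ∀ x, x ∉ square R → ∀ k : ℤ,
      κ ≤ μ.real (ev n y x (Set.Iic k)) + μ.real (ev n y x (Set.Ioi k)) := by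
    intro x hx k
    have hsub : ev n y x Set.univ ⊆ ev n y x (Set.Iic k) ∪ ev n y x (Set.Ioi k) := by
      rintro σ ⟨hσ, j, -, hj⟩
      rcases le_or_gt j k with h | h
      · exact Or.inl ⟨hσ, j, h, hj⟩
      · exact Or.inr ⟨hσ, j, h, hj⟩
    have := ev_univ_lower hP h1 hE hc0 hc hR hx hy
    have := (measureReal_mono (μ := μ) hsub).trans (measureReal_union_le _ _)
    linarith
  have hprod : ∀ (x : Site) (k : ℤ),
      μ.real (ev n y x (Set.Iic k)) * μ.real (ev n y x (Set.Ioi k)) < c * κ ^ 2 / 8 := by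
    intro x k
    refine lt_of_le_of_lt ?_ hn
    refine (hP.real (measurableSet_ev _ _ _ _) (measurableSet_ev _ _ _ _)
      (increasing_ev _ _ _ _) (increasing_ev _ _ _ _)).trans (measureReal_mono ?_)
    exact ev_inter_subset_miss n y x (Set.Iic_disjoint_Ioi le_rfl)
  -- `k` is an upper bound for the favoured crossing number at `x`
  let H : Site → ℤ → Prop := fun x k => κ / 2 ≤ μ.real (ev n y x (Set.Iic k))
  have hstep : ∀ (x x' : Site) (k : ℤ), x ∉ square R → x' ∉ square R → adjStar x x' → H x k →
      H x' (k + cross 0 x x') := by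
    intro x x' k _ hx' hxx' hk
    have hk' : κ / 2 ≤ μ.real (ev n y x (Set.Iic k)) := hk
    have hA : c * κ / 2 ≤ μ.real (ev n y x' (Set.Iic (k + cross 0 x x'))) := by
      have h2 := hP.real (measurableSet_ev n y x (Set.Iic k)) (measurableSet_spin x' true)
        (increasing_ev _ _ _ _) (increasing_spin x')
      have h3 := measureReal_mono (μ := μ) (ev_step (y := y) (J := Set.Iic k)
        (J' := Set.Iic (k + cross 0 x x')) (fun h => hx' (square_mono hnR h)) hxx'
        (fun j hj => by simpa using hj))
      have h4 := hspin x'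
      have h5 : κ / 2 * c ≤ μ.real (ev n y x (Set.Iic k)) * μ.real {σ : Config | σ x' = true} :=
        mul_le_mul hk' h4 hc0.le measureReal_nonneg
      linarith
    have h6 := hprod x' (k + cross 0 x x')
    have h7 := hsum x' hx' (k + cross 0 x x')
    change κ / 2 ≤ μ.real (ev n y x' (Set.Iic (k + cross 0 x x')))
    by_contra! hlt
    have h8 : κ / 2 ≤ μ.real (ev n y x' (Set.Ioi (k + cross 0 x x'))) := by linarith
    have h9 := mul_le_mul hA h8 (by positivity) measureReal_nonneg
    have : 0 < c * κ ^ 2 := by positivity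
    nlinarith
  -- some `k` is an upper bound, since large crossing numbers are unlikely
  obtain ⟨k, hk⟩ : ∃ k, H y k := by
    obtain ⟨m, hm⟩ := exists_ev_small μ n y y (J := fun m : ℕ => Set.Ioi (m : ℤ))
      (fun a b hab => Set.Ioi_subset_Ioi (by exact_mod_cast hab))
      (fun j => ⟨j.toNat, by simp⟩) (η := κ / 8) (by positivity)
    refine ⟨m, ?_⟩
    have := hsum y hy m
    change κ / 2 ≤ _
    linarith
  have hall : ∀ i : ℕ, H y (k - i) := by
    intro i
    induction i with
    | zero => simpa using hk
    | succ i ih =>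
      have := loop hstep ih
      rw [Nat.cast_succ, ← sub_sub]
      exact this
  -- but very negative crossing numbers are unlikely as well
  obtain ⟨m, hm⟩ := exists_ev_small μ n y y (J := fun m : ℕ => Set.Iic (k - m))
    (fun a b hab => Set.Iic_subset_Iic.mpr (by
      have : (a : ℤ) ≤ b := by exact_mod_cast hab
      linarith))
    (fun j => ⟨(k - j).toNat + 1, by simp only [Set.mem_Iic, not_le]; push_cast; omega⟩)
    (η := κ / 8) (by positivity)
  have : κ / 2 ≤ μ.real (ev n y y (Set.Iic (k - m))) := hall m
  linarith

end Percolation
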